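/- Let f : ℝ^{n×m} → ℝ be differentiable with ∇f Lipschitz continuous with constant L (Frobenius norm), and let X* ∈ ℝ^{n×m} be a rank-r matrix with ∇f(X*) = 0, SVD X* = ΦΣΨᵀ, U* = ΦΣ^{1/2}R₀, V* = ΨΣ^{1/2}R₀ (R₀ ∈ O_r), W* = [U*;V*]. Let G : ℝ^{(n+m)×r} → ℝ be differentiable and satisfy the (α,β,δ̄)-regularity condition at W* with α, β, δ̄ > 0 and αβ ≤ 1/4. Let α_k ∈ (0,α], β_k ∈ (0,β], δ_k > 0, and let W₀ ∈ ℝ^{(n+m)×r} satisfy dist(W₀,W*) ≤ min(δ̄, δ_k). Define iterates W_{t+1} = W_t − ν_t ∇G(W_t) with ν_t ∈ (0, 2β_k] and κ_t := ∏_{j=0}^{t−1}(1 − 2ν_j α_k). Then for every t ≥ 0, writing W_t = [U_t;V_t], Ŵ_t = [U_t;−V_t], X_t = U_tV_tᵀ: (a) dist(W_t,W*) ≤ √(κ_t)·δ_k; (b) ‖∇G(W_t)‖_F ≤ (√(κ_t)/β_k)·δ_k; and (c) 2‖∇f(X_t)‖_F + (1/2)‖Ŵ_tᵀW_t‖_F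 ≤ (2L + 1/2)·(2‖W_t‖_F + √(κ_t)·δ_k)·√(κ_t)·δ_k. -/

import Mathlib

/-!
The regularity condition makes gradient descent a contraction in the orbit distance. If `R` attains
`dist(W_t, W*)`, then testing `dist(W_{t+1}, W*)` with the same `R` and expanding the square gives
`dist(W_{t+1}, W*)² ≤ (1 - 2ν_tα) dist(W_t, W*)² + ν_t(ν_t - 2β) ‖∇G(W_t)‖²`, whose last term is
nonpositive (`mdist_step_sq_le`). The contraction factor `1 - 2ν_tα_k` lies in `[0, 1]` because
`αβ ≤ 1/4`, so the iterates stay in the region of regularity and (a) follows by induction.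
Part (b) is Cauchy–Schwarz applied to the regularity inequality.

For (c), `W*R = [U*R; V*R]` satisfies `(U*R)(V*R)ᵀ = X*` and is balanced,
`(U*R)ᵀ(U*R) = (V*R)ᵀ(V*R)`. Hence both `X_t - X*` and `Ŵ_tᵀW_t` are differences `PQ - P₁Q₁` of
products, where `P` and `Q` have norm at most `‖W_t‖` and `P₁`, `Q₁` are within
`ε = dist(W_t, W*)` of them; `fnorm_mul_sub_mul_le` bounds such a difference by `(2‖W_t‖ + ε)ε`.
-/

open scoped Matrix

attribute [local instance] Matrix.frobeniusNormedAddCommGroup Matrix.frobeniusNormedSpace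

/-- The Frobenius inner product `⟨A, B⟩ = trace (Aᵀ B)`. -/
noncomputable def finner {ι κ : Type*} [Fintype ι] [Fintype κ]
    (A B : Matrix ι κ ℝ) : ℝ :=
  Matrix.trace (Aᵀ * B)

/-- The Frobenius norm. -/
noncomputable def fnorm {ι κ : Type*} [Fintype ι] [Fintype κ]
    (A : Matrix ι κ ℝ) : ℝ :=
  Real.sqrt (finner A A)

/-- `dist(Z¹,Z²) = min_{R ∈ O_r} ‖Z¹ − Z²R‖_F`. -/
noncomputable def mdist {ι : Type*} [Fintype ι] {r : ℕ}
    (Z₁ Z₂ : Matrix ι (Fin r) ℝ) : ℝ :=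
  ⨅ R : {R : Matrix (Fin r) (Fin r) ℝ // Rᵀ * R = 1},
    fnorm (Z₁ - Z₂ * (R : Matrix (Fin r) (Fin r) ℝ))

/-- The `(α, β, δ)`-regularity condition at `Zs`, for a function whose gradient is `gradh`:
for every `Z` with `dist(Z,Zs) ≤ δ` there is an orthogonal `R` attaining the minimum in
`dist(Z,Zs)` such that `⟨∇h(Z), Z − Zs R⟩ ≥ α dist(Z,Zs)² + β ‖∇h(Z)‖_F²`. -/
def RegularityCondition {ι : Type*} [Fintype ι] {r : ℕ}
    (gradh : Matrix ι (Fin r) ℝ → Matrix ι (Fin r) ℝ)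
    (Zs : Matrix ι (Fin r) ℝ) (α β δ : ℝ) : Prop :=
  ∀ Z : Matrix ι (Fin r) ℝ, mdist Z Zs ≤ δ →
    ∃ R : Matrix (Fin r) (Fin r) ℝ, Rᵀ * R = 1 ∧
      fnorm (Z - Zs * R) = mdist Z Zs ∧
      finner (gradh Z) (Z - Zs * R) ≥ α * mdist Z Zs ^ 2 + β * fnorm (gradh Z) ^ 2

section FrobeniusNorm

variable {ι κ μ : Type*} [Fintype ι] [Fintype κ] [Fintype μ]

lemma finner_eq_sum (A B : Matrix ι κ ℝ) : finner A B = ∑ j, ∑ i, A i j * B i j := by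
  simp [finner, Matrix.trace, Matrix.mul_apply]

lemma finner_self_nonneg (A : Matrix ι κ ℝ) : 0 ≤ finner A A := by
  rw [finner_eq_sum]
  exact Finset.sum_nonneg fun j _ => Finset.sum_nonneg fun i _ => mul_self_nonneg _

lemma fnorm_sq (A : Matrix ι κ ℝ) : fnorm A ^ 2 = finner A A :=
  Real.sq_sqrt (finner_self_nonneg A)

lemma fnorm_nonneg (A : Matrix ι κ ℝ) : 0 ≤ fnorm A := Real.sqrt_nonneg _

lemma fnorm_eq_norm (A : Matrix ι κ ℝ) : fnorm A = ‖A‖ := by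
  rw [Matrix.frobenius_norm_def, fnorm, finner_eq_sum, Finset.sum_comm, Real.sqrt_eq_rpow]
  simp [sq]

lemma fnorm_mul_le (A : Matrix ι κ ℝ) (B : Matrix κ μ ℝ) :
    fnorm (A * B) ≤ fnorm A * fnorm B := by
  simpa only [fnorm_eq_norm] using Matrix.frobenius_norm_mul A B

lemma fnorm_transpose (A : Matrix ι κ ℝ) : fnorm Aᵀ = fnorm A := by
  simpa only [fnorm_eq_norm] using Matrix.frobenius_norm_transpose A

lemma finner_le_fnorm_mul_fnorm (A B : Matrix ι κ ℝ) : finner A B ≤ fnorm A * fnorm B := by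
  have h := Real.sum_mul_le_sqrt_mul_sqrt (Finset.univ : Finset (κ × ι))
    (fun p => A p.2 p.1) (fun p => B p.2 p.1)
  simpa only [fnorm, finner_eq_sum, Fintype.sum_prod_type, sq] using h

lemma fnorm_sub_smul_sq (A B : Matrix ι κ ℝ) (c : ℝ) :
    fnorm (A - c • B) ^ 2 = fnorm A ^ 2 - 2 * c * finner B A + c ^ 2 * fnorm B ^ 2 := by
  simp only [fnorm_sq, finner_eq_sum, Finset.mul_sum, ← Finset.sum_sub_distrib,
    ← Finset.sum_add_distrib, Matrix.sub_apply, Matrix.smul_apply, smul_eq_mul]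
  refine Finset.sum_congr rfl fun j _ => Finset.sum_congr rfl fun i _ => ?_
  ring

/-- A difference of products is controlled by the factors `P`, `Q` and the perturbations alone,
by `PQ - P₁Q₁ = P(Q - Q₁) + (P - P₁)Q - (P - P₁)(Q - Q₁)`. -/
lemma fnorm_mul_sub_mul_le (P P₁ : Matrix ι κ ℝ) (Q Q₁ : Matrix κ μ ℝ) {w ε : ℝ}
    (hP : fnorm P ≤ w) (hQ : fnorm Q ≤ w)
    (hP₁ : fnorm (P - P₁) ≤ ε) (hQ₁ : fnorm (Q - Q₁) ≤ ε) :
    fnorm (P * Q - P₁ * Q₁) ≤ (2 * w + ε) * ε := by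
  have hw : 0 ≤ w := (fnorm_nonneg P).trans hP
  have hε : 0 ≤ ε := (fnorm_nonneg _).trans hP₁
  have e : P * Q - P₁ * Q₁ = P * (Q - Q₁) + (P - P₁) * Q - (P - P₁) * (Q - Q₁) := by
    simp only [Matrix.mul_sub, Matrix.sub_mul]
    abel
  have h1 : fnorm (P * (Q - Q₁)) ≤ w * ε :=
    (fnorm_mul_le _ _).trans (mul_le_mul hP hQ₁ (fnorm_nonneg _) hw)
  have h2 : fnorm ((P - P₁) * Q) ≤ ε * w :=
    (fnorm_mul_le _ _).trans (mul_le_mul hP₁ hQ (fnorm_nonneg _) hε)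
  have h3 : fnorm ((P - P₁) * (Q - Q₁)) ≤ ε * ε :=
    (fnorm_mul_le _ _).trans (mul_le_mul hP₁ hQ₁ (fnorm_nonneg _) hε)
  rw [fnorm_eq_norm] at h1 h2 h3 ⊢
  rw [e]
  have h4 := norm_sub_le (P * (Q - Q₁) + (P - P₁) * Q) ((P - P₁) * (Q - Q₁))
  have h5 := norm_add_le (P * (Q - Q₁)) ((P - P₁) * Q)
  nlinarith

lemma finner_sum_rows (W : Matrix (ι ⊕ μ) κ ℝ) :
    finner W W = finner W.toRows₁ W.toRows₁ + finner W.toRows₂ W.toRows₂ := by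
  simp [finner_eq_sum, Fintype.sum_sum_type, Finset.sum_add_distrib]

lemma fnorm_toRows₁_le (W : Matrix (ι ⊕ μ) κ ℝ) : fnorm W.toRows₁ ≤ fnorm W :=
  Real.sqrt_le_sqrt (by rw [finner_sum_rows W]; linarith [finner_self_nonneg W.toRows₂])

lemma fnorm_toRows₂_le (W : Matrix (ι ⊕ μ) κ ℝ) : fnorm W.toRows₂ ≤ fnorm W :=
  Real.sqrt_le_sqrt (by rw [finner_sum_rows W]; linarith [finner_self_nonneg W.toRows₁])

/-- The matrix `Ŵ = [U; -V]` attached to `W = [U; V]`. -/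
def hatRows (W : Matrix (ι ⊕ μ) κ ℝ) : Matrix (ι ⊕ μ) κ ℝ :=
  Matrix.fromRows W.toRows₁ (-W.toRows₂)

lemma fnorm_hatRows (W : Matrix (ι ⊕ μ) κ ℝ) : fnorm (hatRows W) = fnorm W := by
  simp [fnorm, finner_eq_sum, hatRows, Fintype.sum_sum_type]

lemma hatRows_sub (W Z : Matrix (ι ⊕ μ) κ ℝ) : hatRows (W - Z) = hatRows W - hatRows Z := by
  ext (i | i) j
  · simp [hatRows]
  · simp [hatRows]
    ring

lemma hatRows_transpose_mul (W : Matrix (ι ⊕ μ) κ ℝ) :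
    (hatRows W)ᵀ * W = W.toRows₁ᵀ * W.toRows₁ - W.toRows₂ᵀ * W.toRows₂ := by
  ext i j
  simp [hatRows, Matrix.mul_apply, Fintype.sum_sum_type, sub_eq_add_neg]

end FrobeniusNorm

lemma mdist_nonneg {ι : Type*} [Fintype ι] {r : ℕ} (Z₁ Z₂ : Matrix ι (Fin r) ℝ) :
    0 ≤ mdist Z₁ Z₂ :=
  Real.iInf_nonneg fun _ => fnorm_nonneg _

lemma mdist_le {ι : Type*} [Fintype ι] {r : ℕ} (Z₁ Z₂ : Matrix ι (Fin r) ℝ)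
    {R : Matrix (Fin r) (Fin r) ℝ} (hR : Rᵀ * R = 1) : mdist Z₁ Z₂ ≤ fnorm (Z₁ - Z₂ * R) :=
  ciInf_le (f := fun R : {R : Matrix (Fin r) (Fin r) ℝ // Rᵀ * R = 1} =>
      fnorm (Z₁ - Z₂ * (R : Matrix (Fin r) (Fin r) ℝ)))
    ⟨0, by rintro _ ⟨_, rfl⟩; exact fnorm_nonneg _⟩ ⟨R, hR⟩

/-- One gradient step with step size `ν ≤ 2β` inside the region of regularity contracts the
squared orbit distance by the factor `1 - 2να`. -/
lemma mdist_step_sq_le {ι : Type*} [Fintype ι] {r : ℕ}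
    {g : Matrix ι (Fin r) ℝ → Matrix ι (Fin r) ℝ} {Zs Z : Matrix ι (Fin r) ℝ} {α β δ ν : ℝ}
    (hreg : RegularityCondition g Zs α β δ) (hZ : mdist Z Zs ≤ δ)
    (hν : 0 < ν) (hνβ : ν ≤ 2 * β) :
    mdist (Z - ν • g Z) Zs ^ 2 ≤ (1 - 2 * ν * α) * mdist Z Zs ^ 2 := by
  obtain ⟨R, hR, hd, hin⟩ := hreg Z hZ
  have h1 := pow_le_pow_left₀ (mdist_nonneg _ _) (mdist_le (Z - ν • g Z) Zs hR) 2
  rw [sub_right_comm, fnorm_sub_smul_sq, hd] at h1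
  have h2 := mul_le_mul_of_nonneg_left hin hν.le
  have h3 : 0 ≤ ν * (2 * β - ν) * fnorm (g Z) ^ 2 :=
    mul_nonneg (mul_nonneg hν.le (by linarith)) (sq_nonneg _)
  nlinarith

lemma fnorm_grad_le {ι : Type*} [Fintype ι] {r : ℕ}
    {g : Matrix ι (Fin r) ℝ → Matrix ι (Fin r) ℝ} {Zs Z : Matrix ι (Fin r) ℝ} {α β δ : ℝ}
    (hreg : RegularityCondition g Zs α β δ) (hZ : mdist Z Zs ≤ δ) (hα : 0 < α) :
    β * fnorm (g Z) ≤ mdist Z Zs := by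
  obtain ⟨R, hR, hd, hin⟩ := hreg Z hZ
  have h1 := finner_le_fnorm_mul_fnorm (g Z) (Z - Zs * R)
  rw [hd] at h1
  rcases (fnorm_nonneg (g Z)).eq_or_lt with h0 | h0
  · rw [← h0, mul_zero]
    exact mdist_nonneg _ _
  · refine le_of_mul_le_mul_left ?_ h0
    nlinarith [mul_nonneg hα.le (sq_nonneg (mdist Z Zs))]

/-- The factor `Φ Σ^{1/2} R₀` of the balanced factorization, further rotated by `R`: products of
two such factors do not see the rotations. -/
lemma rotated_factor_mul_transpose {n m r : ℕ} (Φ : Matrix (Fin n) (Fin r) ℝ)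
    (Ψ : Matrix (Fin m) (Fin r) ℝ) {σ : Fin r → ℝ} (hσ : ∀ i, 0 < σ i)
    {R₀ R : Matrix (Fin r) (Fin r) ℝ} (hR₀ : R₀ᵀ * R₀ = 1) (hR : Rᵀ * R = 1) :
    (Φ * Matrix.diagonal (fun i => Real.sqrt (σ i)) * R₀ * R) *
      (Ψ * Matrix.diagonal (fun i => Real.sqrt (σ i)) * R₀ * R)ᵀ
      = Φ * Matrix.diagonal σ * Ψᵀ := by
  have hR₀' := mul_eq_one_comm.mp hR₀
  have hR' := mul_eq_one_comm.mp hR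
  have hS : Matrix.diagonal (fun i => Real.sqrt (σ i)) * Matrix.diagonal (fun i => Real.sqrt (σ i))
      = Matrix.diagonal σ := by
    rw [Matrix.diagonal_mul_diagonal]
    congr 1
    funext i
    exact Real.mul_self_sqrt (hσ i).le
  simp only [Matrix.transpose_mul, Matrix.diagonal_transpose, Matrix.mul_assoc]
  rw [← Matrix.mul_assoc R, hR', Matrix.one_mul, ← Matrix.mul_assoc R₀, hR₀', Matrix.one_mul,
    ← Matrix.mul_assoc (Matrix.diagonal _) (Matrix.diagonal _), hS]

lemma rotated_factor_gram {n r : ℕ} {Φ : Matrix (Fin n) (Fin r) ℝ} (hΦ : Φᵀ * Φ = 1)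
    (S R₀ R : Matrix (Fin r) (Fin r) ℝ) :
    (Φ * S * R₀ * R)ᵀ * (Φ * S * R₀ * R) = Rᵀ * (R₀ᵀ * (Sᵀ * (S * (R₀ * R)))) := by
  simp only [Matrix.transpose_mul, Matrix.mul_assoc]
  rw [← Matrix.mul_assoc Φᵀ, hΦ, Matrix.one_mul]

theorem stmt12 {n m r : ℕ}
    (f : Matrix (Fin n) (Fin m) ℝ → ℝ) (hf : Differentiable ℝ f)
    (gradf : Matrix (Fin n) (Fin m) ℝ → Matrix (Fin n) (Fin m) ℝ)
    (hgradf : ∀ X D, fderiv ℝ f X D = finner (gradf X) D)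
    (L : ℝ) (hL : 0 ≤ L)
    (hLip : ∀ X Y : Matrix (Fin n) (Fin m) ℝ, fnorm (gradf X - gradf Y) ≤ L * fnorm (X - Y))
    (Xs : Matrix (Fin n) (Fin m) ℝ)
    (Φ : Matrix (Fin n) (Fin r) ℝ) (Ψ : Matrix (Fin m) (Fin r) ℝ)
    (σ : Fin r → ℝ) (hσ : ∀ i, 0 < σ i)
    (hΦ : Φᵀ * Φ = 1) (hΨ : Ψᵀ * Ψ = 1)
    (hXs : Xs = Φ * Matrix.diagonal σ * Ψᵀ) (hrank : Xs.rank = r)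
    (hcrit : gradf Xs = 0)
    (R₀ : Matrix (Fin r) (Fin r) ℝ) (hR₀ : R₀ᵀ * R₀ = 1)
    (Ws : Matrix (Fin n ⊕ Fin m) (Fin r) ℝ)
    (hWs : Ws = Matrix.fromRows (Φ * Matrix.diagonal (fun i => Real.sqrt (σ i)) * R₀)
        (Ψ * Matrix.diagonal (fun i => Real.sqrt (σ i)) * R₀))
    (G : Matrix (Fin n ⊕ Fin m) (Fin r) ℝ → ℝ) (hGdiff : Differentiable ℝ G)
    (gradG : Matrix (Fin n ⊕ Fin m) (Fin r) ℝ → Matrix (Fin n ⊕ Fin m) (Fin r) ℝ)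
    (hgradG : ∀ W D, fderiv ℝ G W D = finner (gradG W) D)
    (α β δbar : ℝ) (hα : 0 < α) (hβ : 0 < β) (hδbar : 0 < δbar)
    (hreg : RegularityCondition gradG Ws α β δbar) (hαβ : α * β ≤ 1 / 4)
    (αk βk δk : ℝ) (hαk : 0 < αk ∧ αk ≤ α) (hβk : 0 < βk ∧ βk ≤ β) (hδk : 0 < δk)
    (W : ℕ → Matrix (Fin n ⊕ Fin m) (Fin r) ℝ)
    (hW0 : mdist (W 0) Ws ≤ min δbar δk)
    (ν : ℕ → ℝ) (hν : ∀ t, 0 < ν t ∧ ν t ≤ 2 * βk)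
    (hupd : ∀ t, W (t + 1) = W t - ν t • gradG (W t)) :
    ∀ t : ℕ,
      mdist (W t) Ws ≤ Real.sqrt (∏ j ∈ Finset.range t, (1 - 2 * ν j * αk)) * δk ∧
      fnorm (gradG (W t))
        ≤ Real.sqrt (∏ j ∈ Finset.range t, (1 - 2 * ν j * αk)) / βk * δk ∧
      2 * fnorm (gradf ((W t).toRows₁ * ((W t).toRows₂)ᵀ))
          + (1 / 2) * fnorm ((Matrix.fromRows ((W t).toRows₁) (-(W t).toRows₂))ᵀ * W t)
        ≤ (2 * L + 1 / 2)
            * (2 * fnorm (W t) + Real.sqrt (∏ j ∈ Finset.range t, (1 - 2 * ν j * αk)) * δk)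
            * (Real.sqrt (∏ j ∈ Finset.range t, (1 - 2 * ν j * αk)) * δk) := by
  -- The contraction factors lie in `[0, 1]`, since `2ν_jα_k ≤ 4β_kα_k ≤ 4βα ≤ 1`.
  have hfac : ∀ j, 0 ≤ 1 - 2 * ν j * αk := fun j => by
    have h1 : ν j * αk ≤ 2 * β * α :=
      mul_le_mul ((hν j).2.trans (by linarith [hβk.2])) hαk.2 hαk.1.le (by linarith)
    linarith
  have hfac1 : ∀ j, 1 - 2 * ν j * αk ≤ 1 := fun j => by
    have := mul_pos (hν j).1 hαk.1
    linarith
  have hκ : ∀ t, 0 ≤ ∏ j ∈ Finset.range t, (1 - 2 * ν j * αk) :=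
    fun t => Finset.prod_nonneg fun j _ => hfac j
  have main : ∀ t, mdist (W t) Ws ≤ δbar ∧
      mdist (W t) Ws ^ 2 ≤ (∏ j ∈ Finset.range t, (1 - 2 * ν j * αk)) * δk ^ 2 := by
    intro t
    induction t with
    | zero =>
      refine ⟨hW0.trans (min_le_left _ _), ?_⟩
      simpa using pow_le_pow_left₀ (mdist_nonneg _ _) (hW0.trans (min_le_right _ _)) 2
    | succ t ih =>
      obtain ⟨ih1, ih2⟩ := ih
      have hs := mdist_step_sq_le hreg ih1 (hν t).1 ((hν t).2.trans (by linarith [hβk.2]))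
      rw [← hupd t] at hs
      have hs' : mdist (W (t + 1)) Ws ^ 2 ≤ (1 - 2 * ν t * αk) * mdist (W t) Ws ^ 2 := by
        refine hs.trans (mul_le_mul_of_nonneg_right ?_ (sq_nonneg _))
        have := mul_le_mul_of_nonneg_left hαk.2 (hν t).1.le
        linarith
      constructor
      · refine le_trans (le_of_sq_le_sq ?_ (mdist_nonneg _ _)) ih1
        exact hs'.trans (mul_le_of_le_one_left (sq_nonneg _) (hfac1 t))
      · rw [Finset.prod_range_succ]
        have := mul_le_mul_of_nonneg_left ih2 (hfac t)
        linarith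
  intro t
  obtain ⟨hδt, hsq⟩ := main t
  have ha : mdist (W t) Ws ≤ Real.sqrt (∏ j ∈ Finset.range t, (1 - 2 * ν j * αk)) * δk := by
    refine le_of_sq_le_sq ?_ (mul_nonneg (Real.sqrt_nonneg _) hδk.le)
    rw [mul_pow, Real.sq_sqrt (hκ t)]
    exact hsq
  refine ⟨ha, ?_, ?_⟩
  · have h1 := fnorm_grad_le hreg hδt hα
    have h2 := mul_le_mul_of_nonneg_right hβk.2 (fnorm_nonneg (gradG (W t)))
    rw [div_mul_eq_mul_div, le_div_iff₀ hβk.1]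
    linarith
  · obtain ⟨R, hR, hd, -⟩ := hreg (W t) hδt
    generalize Real.sqrt (∏ j ∈ Finset.range t, (1 - 2 * ν j * αk)) * δk = ε at ha
    have hε : fnorm (W t - Ws * R) ≤ ε := hd.le.trans ha
    have hU : (Ws * R).toRows₁ = Φ * Matrix.diagonal (fun i => Real.sqrt (σ i)) * R₀ * R := by
      rw [hWs, Matrix.fromRows_mul, Matrix.toRows₁_fromRows]
    have hV : (Ws * R).toRows₂ = Ψ * Matrix.diagonal (fun i => Real.sqrt (σ i)) * R₀ * R := by
      rw [hWs, Matrix.fromRows_mul, Matrix.toRows₂_fromRows]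
    have hX : (Ws * R).toRows₁ * (Ws * R).toRows₂ᵀ = Xs := by
      rw [hU, hV, hXs, rotated_factor_mul_transpose Φ Ψ hσ hR₀ hR]
    have hbal : (hatRows (Ws * R))ᵀ * (Ws * R) = 0 := by
      rw [hatRows_transpose_mul, hU, hV, rotated_factor_gram hΦ, rotated_factor_gram hΨ, sub_self]
    have hXdist : fnorm ((W t).toRows₁ * (W t).toRows₂ᵀ - Xs) ≤ (2 * fnorm (W t) + ε) * ε := by
      rw [← hX]
      refine fnorm_mul_sub_mul_le _ _ _ _ (fnorm_toRows₁_le _) ?_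
        ((fnorm_toRows₁_le (W t - Ws * R)).trans hε) ?_
      · rw [fnorm_transpose]
        exact fnorm_toRows₂_le _
      · rw [← Matrix.transpose_sub, fnorm_transpose]
        exact (fnorm_toRows₂_le (W t - Ws * R)).trans hε
    have hbdist : fnorm ((hatRows (W t))ᵀ * W t) ≤ (2 * fnorm (W t) + ε) * ε := by
      rw [← sub_zero ((hatRows (W t))ᵀ * W t), ← hbal]
      refine fnorm_mul_sub_mul_le _ _ _ _ ?_ le_rfl ?_ hε
      · rw [fnorm_transpose, fnorm_hatRows]
      · rw [← Matrix.transpose_sub, fnorm_transpose, ← hatRows_sub, fnorm_hatRows]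
        exact hε
    have hgrad := hLip ((W t).toRows₁ * (W t).toRows₂ᵀ) Xs
    rw [hcrit, sub_zero] at hgrad
    have hgrad' := hgrad.trans (mul_le_mul_of_nonneg_left hXdist hL)
    unfold hatRows at hbdist
    linarith
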